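/- Let d ≥ 1 and α > 0. For every ε > 0 there exists c(ε) > 0 such that ℙ-almost surely, P₀(A(t) ≤ t^{s(d,α)−ε}) ≤ exp(−t^{c(ε)}) for all sufficiently large t. -/

import Mathlib

open MeasureTheory ProbabilityTheory Filter Set

noncomputable section

/-- `n`-step transition probabilities of the discrete-time simple random walk on `ℤ^m`. -/
def srwKernel (m : ℕ) : ℕ → (Fin m → ℤ) → (Fin m → ℤ) → ℝ
  | 0, x, y => if x = y then 1 else 0
  | n + 1, x, y =>
      (∑ i : Fin m, (srwKernel m n (Function.update x i (x i + 1)) y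
        + srwKernel m n (Function.update x i (x i - 1)) y)) / (2 * m)

/-- Transition kernel of the continuous-time simple random walk on `ℤ^m` which jumps to
each of its `2m` nearest neighbours at rate `1` (total jump rate `2m`). -/
def heatKernel (m : ℕ) (t : ℝ) (x y : Fin m → ℤ) : ℝ :=
  ∑' n : ℕ, Real.exp (-(2 * m) * t) * ((2 * m) * t) ^ n / n.factorial * srwKernel m n x y

/-- `(P, S)` is (a realization of) the continuous-time simple random walk on `ℤ^m`:
under `P x` the process `S` starts at `x`, has right-continuous (piecewise constant)
paths, and its finite-dimensional distributions are given by the heat kernel. -/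
structure IsCTSRW (m : ℕ) {Ω : Type*} [MeasurableSpace Ω]
    (P : (Fin m → ℤ) → Measure Ω) (S : ℝ → Ω → (Fin m → ℤ)) : Prop where
  prob : ∀ x, IsProbabilityMeasure (P x)
  meas : Measurable fun p : ℝ × Ω => S p.1 p.2
  start : ∀ x, ∀ᵐ ω ∂ P x, S 0 ω = x
  rightCont : ∀ x, ∀ᵐ ω ∂ P x, ∀ t : ℝ, 0 ≤ t →
    ∃ ε > (0 : ℝ), ∀ u, t ≤ u → u < t + ε → S u ω = S t ω
  fdd : ∀ x (n : ℕ) (t : Fin (n + 1) → ℝ), 0 ≤ t 0 →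
    (∀ i : Fin n, t i.castSucc ≤ t i.succ) →
    ∀ y : Fin (n + 1) → (Fin m → ℤ),
      (P x {ω | ∀ i, S (t i) ω = y i}).toReal
        = heatKernel m (t 0) x (y 0)
          * ∏ i : Fin n, heatKernel m (t i.succ - t i.castSucc) (y i.castSucc) (y i.succ)

/-- `z` is an i.i.d. nonnegative random scenery on `ℤ^d` whose common upper tail decays
like `r^{-α+o(1)}`. -/
structure IsScenery (d : ℕ) (α : ℝ) {Ω : Type*} [MeasurableSpace Ω]
    (μ : Measure Ω) (z : (Fin d → ℤ) → Ω → ℝ) : Prop where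
  prob : IsProbabilityMeasure μ
  meas : ∀ x, Measurable (z x)
  nonneg : ∀ x ω, 0 ≤ z x ω
  indep : iIndepFun z μ
  ident : ∀ x, IdentDistrib (z x) (z 0) μ μ
  tail : Tendsto (fun r : ℝ => Real.log (μ {ω | r < z 0 ω}).toReal / Real.log r)
    atTop (nhds (-α))

/-- The random walk in random scenery `A(t) = ∫₀ᵗ z(S_u) du`. -/
def rwrs {Ωz Ωw : Type*} (d : ℕ) (z : (Fin d → ℤ) → Ωz → ℝ)
    (S : ℝ → Ωw → (Fin d → ℤ)) (t : ℝ) (ζ : Ωz) (ω : Ωw) : ℝ :=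
  ∫ u in Set.Ioc (0 : ℝ) t, z (S u ω) ζ

end

open MeasureTheory ProbabilityTheory Filter Set

/-- The typical growth exponent `s(d,α)` of the random walk in random scenery. -/
noncomputable def sExp (d : ℕ) (α : ℝ) : ℝ :=
  if d = 1 then max ((α + 1) / (2 * α)) 1 else max (1 / α) 1

/-!
Write `β = 1 / 2` if `d = 1` and `β = 0` otherwise. The walk on `ℤ^d` returns to its starting
point at time `t` with probability `O(t ^ (-d / 2))`; expanding high binomial moments of the number
of visits over increasing tuples of times shows that, outside an event of stretched-exponentially
small probability, the walk observed at the times `v, v + 1, …, v + n - 1` visits no site more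
than `n ^ (β + δ)` times. For a fixed path with this property, `∑ i < n, z (S (v + i))` is a sum of
independent variables weighted by the local times. Retaining only the sites where the scenery
exceeds `n ^ ρ`, for a suitable `ρ`, Chernoff's bound makes it stretched-exponentially unlikely
that this sum falls below `n ^ (s - ε)`. The integral `A(n)` is the average of these sums over
`v ∈ (0, 1]`, so Fubini and Markov carry the estimate over to `A(n)` under the joint law of scenery
and walk. Markov's inequality and Borel–Cantelli turn it into an almost sure statement about the
scenery along integers, and monotonicity of `A` gives all real `t`.

The Bochner integral defining `A(t)` is `0` by convention when the scenery is not integrable along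
the path, so integrability has to be checked: the scenery grows subexponentially in space, whereas
the heat kernel decays faster than any exponential.
-/

open scoped ENNReal Topology Finset

/-! ### Asymptotics of real powers -/

lemma eventually_mul_rpow_le_rpow {p q : ℝ} (hpq : p < q) (K : ℝ) :
    ∀ᶠ x : ℝ in atTop, K * x ^ p ≤ x ^ q := by
  filter_upwards [(tendsto_rpow_atTop (sub_pos.2 hpq)).eventually_ge_atTop K,
    eventually_gt_atTop 0] with x hK hx
  calc K * x ^ p ≤ x ^ (q - p) * x ^ p := by gcongr
    _ = x ^ q := by rw [← Real.rpow_add hx, sub_add_cancel]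

lemma eventually_le_rpow {q : ℝ} (hq : 0 < q) (K : ℝ) : ∀ᶠ x : ℝ in atTop, K ≤ x ^ q :=
  (tendsto_rpow_atTop hq).eventually_ge_atTop K

lemma eventually_mul_one_add_log_le_rpow {q : ℝ} (hq : 0 < q) (K : ℝ) :
    ∀ᶠ x : ℝ in atTop, K * (1 + Real.log x) ≤ x ^ q := by
  have hone : (fun _ : ℝ => (1 : ℝ)) =o[atTop] fun x => x ^ q :=
    Asymptotics.isLittleO_const_left.2
      (Or.inr (tendsto_norm_atTop_atTop.comp (tendsto_rpow_atTop hq)))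
  have hsum := (hone.add (isLittleO_log_rpow_atTop hq)).const_mul_left K
  filter_upwards [hsum.bound one_pos, eventually_ge_atTop 0] with x hx hx0
  rw [one_mul, Real.norm_of_nonneg (Real.rpow_nonneg hx0 q)] at hx
  exact (le_abs_self _).trans hx

lemma eventually_mul_exp_neg_rpow_le {p q : ℝ} (hq : 0 < q) (hpq : p < q) (K : ℝ) :
    ∀ᶠ x : ℝ in atTop, K * x * Real.exp (-x ^ q) ≤ Real.exp (-x ^ p) := by
  filter_upwards [eventually_mul_rpow_le_rpow hpq 2, eventually_mul_one_add_log_le_rpow hq 4,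
    eventually_ge_atTop K, eventually_gt_atTop 0] with x hpow hlog hK hx
  calc K * x * Real.exp (-x ^ q) ≤ x * x * Real.exp (-x ^ q) := by gcongr
    _ = Real.exp (Real.log x + Real.log x + -x ^ q) := by
        rw [Real.exp_add, Real.exp_add, Real.exp_log hx]
    _ ≤ Real.exp (-x ^ p) := Real.exp_le_exp.2 (by linarith)

lemma eventually_mul_rpow_le_natFloor_rpow {p q : ℝ} (hpq : p < q) (K : ℝ) :
    ∀ᶠ x : ℝ in atTop, K * x ^ p ≤ (⌊x⌋₊ : ℝ) ^ q := by
  have hratio : Tendsto (fun x : ℝ => ((⌊x⌋₊ : ℝ) / x) ^ q) atTop (𝓝 1) := by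
    simpa using (tendsto_nat_floor_div_atTop (R := ℝ)).rpow_const (p := q) (Or.inl one_ne_zero)
  filter_upwards [hratio.eventually (lt_mem_nhds (show (1 / 2 : ℝ) < 1 by norm_num)),
    eventually_mul_rpow_le_rpow hpq (2 * K), eventually_gt_atTop 0] with x hx hK hx0
  rw [Real.div_rpow (by positivity) hx0.le, lt_div_iff₀ (by positivity)] at hx
  linarith

lemma summable_exp_neg_rpow {c : ℝ} (hc : 0 < c) :
    Summable fun n : ℕ => Real.exp (-(n : ℝ) ^ c) := by
  have hexp : (fun x : ℝ => Real.exp (-x ^ c)) =o[atTop] fun x => x ^ (-2 : ℝ) := by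
    refine ((isLittleO_exp_neg_mul_rpow_atTop one_pos (-2 / c)).comp_tendsto
      (tendsto_rpow_atTop hc)).congr' (by simp [Function.comp_def]) ?_
    filter_upwards [eventually_ge_atTop 0] with x hx
    rw [Function.comp_apply, ← Real.rpow_mul hx, mul_div_cancel₀ _ hc.ne']
  exact summable_of_isBigO_nat (Real.summable_nat_rpow.2 (by norm_num))
    (hexp.comp_tendsto tendsto_natCast_atTop_atTop).isBigO

/-! ### Off-diagonal decay of the heat kernel -/

/-- The `ℓ¹` norm on the lattice `ℤ^ι`, real-valued because it is used as an exponential weight. -/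
def l1Norm {ι : Type*} [Fintype ι] (x : ι → ℤ) : ℝ := ∑ i, |(x i : ℝ)|

section l1Norm

variable {ι : Type*} [Fintype ι]

lemma l1Norm_neg (x : ι → ℤ) : l1Norm (-x) = l1Norm x := by simp [l1Norm]

lemma l1Norm_add_le (x y : ι → ℤ) : l1Norm (x + y) ≤ l1Norm x + l1Norm y := by
  simp only [l1Norm, ← Finset.sum_add_distrib, Pi.add_apply, Int.cast_add]
  gcongr with i
  exact abs_add_le _ _

lemma l1Norm_single [DecidableEq ι] (i : ι) (a : ℤ) : l1Norm (Pi.single i a) = |(a : ℝ)| := by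
  rw [l1Norm, Finset.sum_eq_single i (fun j _ hj => by simp [hj]) (by simp), Pi.single_eq_same]

end l1Norm

lemma summable_exp_neg_mul_abs_int {κ : ℝ} (hκ : 0 < κ) :
    Summable fun k : ℤ => Real.exp (-κ * |(k : ℝ)|) := by
  have hnat : Summable fun n : ℕ => Real.exp (-κ * |((n : ℤ) : ℝ)|) := by
    refine (Real.summable_exp_nat_mul_iff.2 (neg_lt_zero.2 hκ)).congr fun n => ?_
    rw [Int.cast_natCast, Nat.abs_cast, mul_comm]
  exact hnat.of_nat_of_neg (by simpa using hnat)

lemma summable_exp_neg_mul_l1Norm {κ : ℝ} (hκ : 0 < κ) (m : ℕ) :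
    Summable fun x : Fin m → ℤ => Real.exp (-κ * l1Norm x) := by
  induction m with
  | zero => exact (hasSum_fintype _).summable
  | succ m ih =>
    refine (Fin.consEquiv fun _ => ℤ).summable_iff.1 <|
      ((summable_exp_neg_mul_abs_int hκ).mul_of_nonneg ih (fun _ => (Real.exp_pos _).le)
        fun _ => (Real.exp_pos _).le).congr fun p => ?_
    simp [Fin.consEquiv, l1Norm, Fin.sum_univ_succ, mul_add, Real.exp_add]

lemma tendsto_l1Norm_cofinite (m : ℕ) :
    Tendsto (l1Norm : (Fin m → ℤ) → ℝ) cofinite atTop := by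
  have h := (summable_exp_neg_mul_l1Norm one_pos m).tendsto_cofinite_zero
  simpa [tendsto_neg_atBot_iff] using Real.tendsto_exp_comp_nhds_zero.1 h

section Kernel

variable {m : ℕ}

lemma srwKernel_nonneg (n : ℕ) (x y : Fin m → ℤ) : 0 ≤ srwKernel m n x y := by
  induction n generalizing x with
  | zero => unfold srwKernel; positivity
  | succ n ih =>
    exact div_nonneg (Finset.sum_nonneg fun i _ => add_nonneg (ih _) (ih _)) (by positivity)

lemma srwKernel_succ (n : ℕ) (x y : Fin m → ℤ) :
    srwKernel m (n + 1) x y = (∑ i, (srwKernel m n (x + Pi.single i 1) y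
      + srwKernel m n (x - Pi.single i 1) y)) / (2 * m) := by
  have hadd (i : Fin m) : Function.update x i (x i + 1) = x + Pi.single i 1 := by
    ext j; rcases eq_or_ne j i with rfl | h <;> simp [*]
  have hsub (i : Fin m) : Function.update x i (x i - 1) = x - Pi.single i 1 := by
    ext j; rcases eq_or_ne j i with rfl | h <;> simp [*]
  simp only [srwKernel, hadd, hsub]

lemma srwKernel_le_exp {κ : ℝ} (hκ : 0 ≤ κ) (n : ℕ) (x y : Fin m → ℤ) :
    srwKernel m n x y ≤ Real.exp (κ * (n - l1Norm (x - y))) := by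
  induction n generalizing x with
  | zero =>
    rw [srwKernel]
    split_ifs with h
    · simp [h, l1Norm]
    · positivity
  | succ n ih =>
    have hstep (v : Fin m → ℤ) (hv : l1Norm v = 1) :
        srwKernel m n (x + v) y ≤ Real.exp (κ * ((n + 1 : ℕ) - l1Norm (x - y))) := by
      refine (ih _).trans (Real.exp_le_exp.2 (mul_le_mul_of_nonneg_left ?_ hκ))
      have htri : l1Norm (x - y) ≤ l1Norm (x + v - y) + 1 := by
        have h := l1Norm_add_le (x + v - y) (-v)
        rwa [l1Norm_neg, hv, show x + v - y + -v = x - y by abel] at h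
      push_cast
      linarith
    rw [srwKernel_succ]
    refine div_le_of_le_mul₀ (by positivity) (Real.exp_pos _).le ?_
    calc ∑ i, (srwKernel m n (x + Pi.single i 1) y + srwKernel m n (x - Pi.single i 1) y)
        ≤ ∑ _i : Fin m, 2 * Real.exp (κ * ((n + 1 : ℕ) - l1Norm (x - y))) := by
          gcongr with i
          rw [two_mul, sub_eq_add_neg]
          exact add_le_add (hstep _ (by simp [l1Norm_single]))
            (hstep _ (by simp [l1Norm_neg, l1Norm_single]))
      _ = Real.exp (κ * ((n + 1 : ℕ) - l1Norm (x - y))) * (2 * m) := by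
          rw [Finset.sum_const, Finset.card_univ, Fintype.card_fin, nsmul_eq_mul]; ring

lemma heatKernel_nonneg {t : ℝ} (ht : 0 ≤ t) (x y : Fin m → ℤ) : 0 ≤ heatKernel m t x y :=
  tsum_nonneg fun n => mul_nonneg (by positivity) (srwKernel_nonneg n x y)

lemma hasSum_pow_div_factorial (x : ℝ) :
    HasSum (fun n : ℕ => x ^ n / n.factorial) (Real.exp x) := by
  rw [Real.exp_eq_exp_ℝ]
  exact NormedSpace.expSeries_div_hasSum_exp x

lemma heatKernel_le_exp {κ t : ℝ} (hκ : 0 ≤ κ) (ht : 0 ≤ t) (x y : Fin m → ℤ) :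
    heatKernel m t x y ≤ Real.exp (2 * m * t * Real.exp κ) * Real.exp (-κ * l1Norm (x - y)) := by
  have hsum := (hasSum_pow_div_factorial (2 * m * t * Real.exp κ)).mul_right
    (Real.exp (-κ * l1Norm (x - y)))
  have hle (n : ℕ) : Real.exp (-(2 * m) * t) * ((2 * m) * t) ^ n / n.factorial * srwKernel m n x y
      ≤ (2 * m * t * Real.exp κ) ^ n / n.factorial * Real.exp (-κ * l1Norm (x - y)) := by
    have hexp : Real.exp (-(2 * m) * t) ≤ 1 :=
      Real.exp_le_one_iff.2 (mul_nonpos_of_nonpos_of_nonneg (by simp) ht)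
    calc Real.exp (-(2 * m) * t) * ((2 * m) * t) ^ n / n.factorial * srwKernel m n x y
        ≤ 1 * ((2 * m) * t) ^ n / n.factorial * Real.exp (κ * (n - l1Norm (x - y))) := by
          gcongr
          · exact srwKernel_nonneg n x y
          · exact srwKernel_le_exp hκ n x y
      _ = _ := by
          rw [mul_pow (2 * m * t), ← Real.exp_nat_mul, mul_sub, sub_eq_add_neg, Real.exp_add]
          ring_nf
  refine hasSum_le hle (Summable.hasSum ?_) hsum
  exact .of_nonneg_of_le
    (fun n => mul_nonneg (by positivity) (srwKernel_nonneg n x y)) hle hsum.summable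

end Kernel

/-! ### On-diagonal decay of the heat kernel -/

section ReturnProbability

open UnitAddTorus

open scoped Classical in
lemma integral_mFourier {ι : Type*} [Fintype ι] (k : ι → ℤ) :
    ∫ θ : UnitAddTorus ι, mFourier k θ = if k = 0 then 1 else 0 := by
  -- Mathlib's torus Fourier theory carries a file-local measure on `ℝ / ℤ`, not `volume`.
  have hvol : (volume : Measure (UnitAddTorus ι)) = .pi fun _ => AddCircle.haarAddCircle := by
    simp [volume_pi, AddCircle.volume_eq_smul_haarAddCircle]
  have h := orthonormal_iff_ite.1 (orthonormal_mFourier (d := ι)) 0 k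
  rw [ContinuousMap.inner_toLp] at h
  rw [hvol]
  simpa [mFourier_zero, eq_comm] using! h

/-- The characteristic function of one jump of the simple random walk on `ℤ^m`, as a function on
the dual torus `(ℝ / ℤ)^m`. -/
noncomputable def walkSymbol {m : ℕ} (θ : UnitAddTorus (Fin m)) : ℝ :=
  (∑ i, (fourier 1 (θ i)).re) / m

variable {m : ℕ}

lemma natCast_mul_walkSymbol (θ : UnitAddTorus (Fin m)) :
    m * walkSymbol θ = ∑ i, (fourier 1 (θ i)).re := by
  rcases eq_or_ne m 0 with rfl | hm
  · simp
  · exact mul_div_cancel₀ _ (Nat.cast_ne_zero.2 hm)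

lemma continuous_walkSymbol : Continuous (walkSymbol (m := m)) := by
  unfold walkSymbol; fun_prop

lemma abs_walkSymbol_le_one (θ : UnitAddTorus (Fin m)) : |walkSymbol θ| ≤ 1 := by
  rw [walkSymbol, abs_div, Nat.abs_cast]
  refine div_le_one_of_le₀ ?_ (Nat.cast_nonneg m)
  calc |∑ i, (fourier 1 (θ i)).re| ≤ ∑ i, |(fourier 1 (θ i)).re| := Finset.abs_sum_le_sum_abs _ _
    _ ≤ ∑ _i : Fin m, 1 := by
        gcongr with i
        exact (Complex.abs_re_le_norm _).trans_eq (Circle.norm_coe _)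
    _ = m := by simp

lemma sum_mFourier_neighbors (k : Fin m → ℤ) (θ : UnitAddTorus (Fin m)) :
    (∑ i, (mFourier (k + Pi.single i 1) θ + mFourier (k - Pi.single i 1) θ)) / (2 * m)
      = walkSymbol θ * mFourier k θ := by
  have hterm (i : Fin m) : mFourier (k + Pi.single i 1) θ + mFourier (k - Pi.single i 1) θ
      = 2 * ((fourier 1 (θ i)).re * mFourier k θ) := by
    rw [sub_eq_add_neg, mFourier_add, mFourier_add, mFourier_neg, mFourier_single, ← mul_add,
      Complex.add_conj]
    push_cast
    ring
  simp only [hterm, ← Finset.mul_sum, ← Finset.sum_mul, walkSymbol]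
  push_cast
  rw [mul_div_mul_left _ _ two_ne_zero, div_mul_eq_mul_div]

lemma srwKernel_eq_integral (n : ℕ) (x y : Fin m → ℤ) :
    (srwKernel m n x y : ℂ)
      = ∫ θ : UnitAddTorus (Fin m), (walkSymbol θ : ℂ) ^ n * mFourier (x - y) θ := by
  induction n generalizing x with
  | zero => simp [srwKernel, integral_mFourier, sub_eq_zero, apply_ite]
  | succ n ih =>
    let F (k : Fin m → ℤ) (θ : UnitAddTorus (Fin m)) : ℂ := (walkSymbol θ : ℂ) ^ n * mFourier k θ
    have hF (k : Fin m → ℤ) : Integrable (F k) :=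
      Continuous.integrable_of_hasCompactSupport
        (((Complex.continuous_ofReal.comp continuous_walkSymbol).pow n).mul (mFourier k).continuous)
        (.of_compactSpace _)
    calc (srwKernel m (n + 1) x y : ℂ)
        = (∑ i, ((∫ θ, F (x - y + Pi.single i 1) θ) + ∫ θ, F (x - y - Pi.single i 1) θ))
            / (2 * m) := by
          rw [srwKernel_succ]
          push_cast
          simp only [ih, add_sub_right_comm, sub_right_comm _ _ y, F]
      _ = ∫ θ, (∑ i, (F (x - y + Pi.single i 1) θ + F (x - y - Pi.single i 1) θ)) / (2 * m) := by
          rw [integral_div, integral_finsetSum]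
          · simp only [integral_add (hF _) (hF _)]
          · exact fun i _ => (hF _).add (hF _)
      _ = ∫ θ, (walkSymbol θ : ℂ) ^ (n + 1) * mFourier (x - y) θ := by
          congr with θ
          simp only [F, ← mul_add, ← Finset.mul_sum, mul_div_assoc, sum_mFourier_neighbors,
            pow_succ, mul_assoc]

lemma srwKernel_self (n : ℕ) (x : Fin m → ℤ) :
    srwKernel m n x x = ∫ θ : UnitAddTorus (Fin m), walkSymbol θ ^ n := by
  have h := srwKernel_eq_integral n x x
  simp only [sub_self, mFourier_zero, ContinuousMap.one_apply, mul_one, ← Complex.ofReal_pow,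
    integral_complex_ofReal] at h
  exact_mod_cast h

lemma hasSum_poisson_mul_walkSymbol_pow (t : ℝ) (θ : UnitAddTorus (Fin m)) :
    HasSum (fun n : ℕ => Real.exp (-(2 * m) * t) * ((2 * m) * t) ^ n / n.factorial
      * walkSymbol θ ^ n) (∏ i, Real.exp (-(2 * t) * (1 - (fourier 1 (θ i)).re))) := by
  have hlim : ∏ i, Real.exp (-(2 * t) * (1 - (fourier 1 (θ i)).re))
      = Real.exp (-(2 * m) * t) * Real.exp (2 * m * t * walkSymbol θ) := by
    rw [← Real.exp_sum, ← Real.exp_add, ← Finset.mul_sum, Finset.sum_sub_distrib,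
      ← natCast_mul_walkSymbol, Finset.sum_const, Finset.card_univ, Fintype.card_fin, nsmul_one]
    ring_nf
  rw [hlim]
  refine ((hasSum_pow_div_factorial _).mul_left _).congr_fun fun n => ?_
  rw [mul_pow]
  ring

lemma heatKernel_self {t : ℝ} (ht : 0 ≤ t) (x : Fin m → ℤ) :
    heatKernel m t x x
      = (∫ θ : UnitAddCircle, Real.exp (-(2 * t) * (1 - (fourier 1 θ).re))) ^ m := by
  set w : ℕ → ℝ := fun n => Real.exp (-(2 * m) * t) * ((2 * m) * t) ^ n / n.factorial with hw
  have hw0 (n : ℕ) : 0 ≤ w n := by positivity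
  have hws : Summable w := by
    simpa only [hw, mul_div_assoc] using (hasSum_pow_div_factorial _).summable.mul_left _
  have hbound (n : ℕ) (θ : UnitAddTorus (Fin m)) : ‖w n * walkSymbol θ ^ n‖ ≤ w n := by
    rw [norm_mul, norm_pow, Real.norm_of_nonneg (hw0 n)]
    exact mul_le_of_le_one_right (hw0 n) (pow_le_one₀ (norm_nonneg _) (abs_walkSymbol_le_one θ))
  have hintegrable (n : ℕ) : Integrable fun θ : UnitAddTorus (Fin m) => w n * walkSymbol θ ^ n :=
    ((continuous_walkSymbol.pow n).const_mul _).integrable_of_hasCompactSupport (.of_compactSpace _)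
  have hnorm : Summable fun n => ∫ θ : UnitAddTorus (Fin m), ‖w n * walkSymbol θ ^ n‖ := by
    refine .of_nonneg_of_le (fun n => integral_nonneg fun θ => norm_nonneg _) (fun n => ?_)
      (hws.mul_left ((volume : Measure (UnitAddTorus (Fin m))).real univ))
    exact (integral_mono (hintegrable n).norm (integrable_const (w n)) (hbound n)).trans_eq
      (integral_const _)
  calc heatKernel m t x x = ∑' n, ∫ θ : UnitAddTorus (Fin m), w n * walkSymbol θ ^ n := by
        simp only [heatKernel, srwKernel_self, integral_const_mul, hw]
    _ = ∫ θ : UnitAddTorus (Fin m), ∏ i, Real.exp (-(2 * t) * (1 - (fourier 1 (θ i)).re)) := by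
        rw [integral_tsum_of_summable_integral_norm hintegrable hnorm]
        exact integral_congr_ae (Eventually.of_forall fun θ =>
          (hasSum_poisson_mul_walkSymbol_pow t θ).tsum_eq)
    _ = _ := by
        rw [volume_pi, integral_fintype_prod_eq_pow fun θ : UnitAddCircle =>
          Real.exp (-(2 * t) * (1 - (fourier 1 θ).re)), Fintype.card_fin]

lemma integral_exp_neg_mul_one_sub_re_fourier_le {t : ℝ} (ht : 0 < t) :
    ∫ θ : UnitAddCircle, Real.exp (-(2 * t) * (1 - (fourier 1 θ).re)) ≤ 1 / √t := by
  have hcos {θ : ℝ} (hθ : θ ∈ Ioc (-(1 / 2) : ℝ) (-(1 / 2) + 1)) :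
      8 * θ ^ 2 ≤ 1 - (fourier 1 (θ : UnitAddCircle)).re := by
    have hre : (fourier 1 (θ : UnitAddCircle)).re = Real.cos (2 * Real.pi * θ) := by
      rw [fourier_coe_apply, ← Complex.exp_ofReal_mul_I_re]
      push_cast
      ring_nf
    have habs : |2 * Real.pi * θ| ≤ Real.pi := by
      rw [abs_mul, abs_of_pos Real.two_pi_pos]
      nlinarith [Real.pi_pos, abs_le.2 ⟨hθ.1.le, show θ ≤ 1 / 2 by linarith [hθ.2]⟩]
    have h := Real.cos_le_one_sub_mul_cos_sq habs
    rw [show 2 / Real.pi ^ 2 * (2 * Real.pi * θ) ^ 2 = 8 * θ ^ 2 by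
      field_simp; ring] at h
    linarith
  have hgauss : Integrable fun θ : ℝ => Real.exp (-(16 * t) * θ ^ 2) :=
    integrable_exp_neg_mul_sq (by positivity)
  rw [← UnitAddCircle.integral_preimage (-(1 / 2))]
  calc ∫ θ in Ioc (-(1 / 2) : ℝ) (-(1 / 2) + 1),
        Real.exp (-(2 * t) * (1 - (fourier 1 (θ : UnitAddCircle)).re))
      ≤ ∫ θ in Ioc (-(1 / 2) : ℝ) (-(1 / 2) + 1), Real.exp (-(16 * t) * θ ^ 2) := by
        refine integral_mono_of_nonneg (Eventually.of_forall fun θ => (Real.exp_pos _).le)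
          hgauss.integrableOn ((ae_restrict_iff' measurableSet_Ioc).2 (ae_of_all _ fun θ hθ => ?_))
        exact Real.exp_le_exp.2 (by nlinarith [hcos hθ])
    _ ≤ ∫ θ : ℝ, Real.exp (-(16 * t) * θ ^ 2) :=
        setIntegral_le_integral hgauss (Eventually.of_forall fun θ => (Real.exp_pos _).le)
    _ = √(Real.pi / (16 * t)) := integral_gaussian _
    _ ≤ √(1 / t) := by
        refine Real.sqrt_le_sqrt ?_
        rw [div_le_div_iff₀ (by positivity) ht]
        nlinarith [Real.pi_le_four]
    _ = 1 / √t := by rw [Real.sqrt_div zero_le_one, Real.sqrt_one]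

lemma heatKernel_self_le {t : ℝ} (ht : 0 < t) (x : Fin m → ℤ) :
    heatKernel m t x x ≤ (1 / √t) ^ m := by
  rw [heatKernel_self ht.le]
  exact pow_le_pow_left₀ (integral_nonneg fun θ => (Real.exp_pos _).le)
    (integral_exp_neg_mul_one_sub_re_fourier_le ht) m

end ReturnProbability

/-! ### Local times -/

section VisitCount

variable {X : Type*} [DecidableEq X]

/-- The number of visits of the path `s` to the point `x` before time `n`. -/
def visitCount (s : ℕ → X) (n : ℕ) (x : X) : ℕ := #{i ∈ Finset.range n | s i = x}

lemma choose_mul_measure_le_visitCount_le [Countable X] [MeasurableSpace X]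
    [MeasurableSingletonClass X] {Ω : Type*} [MeasurableSpace Ω] (ν : Measure Ω) {s : ℕ → Ω → X}
    (hs : ∀ i, Measurable (s i)) (n m k : ℕ) :
    (m.choose k : ℝ≥0∞) * ν {ω | ∃ x, m ≤ visitCount (fun i => s i ω) n x}
      ≤ ∑ T ∈ (Finset.range n).powersetCard k, ν {ω | ∃ x, ∀ i ∈ T, s i ω = x} := by
  set E : Finset ℕ → Set Ω := fun T => {ω | ∃ x, ∀ i ∈ T, s i ω = x} with hE
  have hEmeas (T : Finset ℕ) : MeasurableSet (E T) := by
    simp only [hE, ofPred_exists, ofPred_forall]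
    exact .iUnion fun x => .biInter T.countable_toSet fun i _ => hs i (measurableSet_singleton x)
  set F : Ω → ℝ≥0∞ := fun ω => ∑ T ∈ (Finset.range n).powersetCard k, (E T).indicator 1 ω
  have hF : Measurable F :=
    Finset.measurable_sum _ fun T _ => measurable_one.indicator (hEmeas T)
  -- Every `k`-subset of the `m` or more visit times to `x` contributes `1` to `F`.
  have hchoose {ω : Ω} (hω : ∃ x, m ≤ visitCount (fun i => s i ω) n x) :
      (m.choose k : ℝ≥0∞) ≤ F ω := by
    obtain ⟨x, hx⟩ := hω
    set V := {i ∈ Finset.range n | s i ω = x}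
    calc (m.choose k : ℝ≥0∞) ≤ (V.powersetCard k).card := by
          rw [Finset.card_powersetCard]
          exact_mod_cast Nat.choose_le_choose k hx
      _ = ∑ T ∈ V.powersetCard k, (E T).indicator 1 ω := by
          rw [Finset.card_eq_sum_ones, Nat.cast_sum]
          refine Finset.sum_congr rfl fun T hT => ?_
          have hTV := (Finset.mem_powersetCard.1 hT).1
          have hωT : ω ∈ E T := ⟨x, fun i hi => (Finset.mem_filter.1 (hTV hi)).2⟩
          simp [hωT]
      _ ≤ F ω := Finset.sum_le_sum_of_subset (Finset.powersetCard_mono (Finset.filter_subset _ _))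
  calc (m.choose k : ℝ≥0∞) * ν {ω | ∃ x, m ≤ visitCount (fun i => s i ω) n x}
      ≤ m.choose k * ν {ω | (m.choose k : ℝ≥0∞) ≤ F ω} := by
        gcongr _ * ν ?_
        exact fun ω hω => hchoose hω
    _ ≤ ∫⁻ ω, F ω ∂ν := mul_meas_ge_le_lintegral hF _
    _ = ∑ T ∈ (Finset.range n).powersetCard k, ν (E T) := by
        rw [lintegral_finsetSum _ fun T _ => measurable_one.indicator (hEmeas T)]
        exact Finset.sum_congr rfl fun T _ => lintegral_indicator_one (hEmeas T)

end VisitCount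

lemma strictMono_add_partialSum {k : ℕ} {Δ : Fin k → ℕ} (hΔ : ∀ j, 0 < Δ j) (i : ℕ) :
    StrictMono fun j => i + Fin.partialSum Δ j :=
  Fin.strictMono_iff_lt_succ.2 fun j => by simp [Fin.partialSum_succ, hΔ j]

lemma exists_image_add_partialSum_eq {n k : ℕ} {T : Finset ℕ}
    (hT : T ∈ (Finset.range n).powersetCard (k + 1)) :
    ∃ i ∈ Finset.range n, ∃ Δ ∈ Fintype.piFinset fun _ : Fin k => Finset.Icc 1 n,
      Finset.univ.image (fun j => i + Fin.partialSum Δ j) = T := by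
  obtain ⟨hTn, hcard⟩ := Finset.mem_powersetCard.1 hT
  let o := T.orderEmbOfFin hcard
  have hlt (j : Fin (k + 1)) : o j < n :=
    Finset.mem_range.1 (hTn (Finset.orderEmbOfFin_mem T hcard j))
  have hmono (j : Fin k) : o j.castSucc < o j.succ := o.strictMono j.castSucc_lt_succ
  refine ⟨o 0, Finset.mem_range.2 (hlt 0), fun j => o j.succ - o j.castSucc, ?_, ?_⟩
  · refine Fintype.mem_piFinset.2 fun j => Finset.mem_Icc.2 ?_
    have := hmono j
    have := hlt j.succ
    omega
  · suffices ∀ j, o 0 + Fin.partialSum (fun j => o j.succ - o j.castSucc) j = o j from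
      (Finset.image_congr fun j _ => this j).trans (Finset.image_orderEmbOfFin_univ T hcard)
    intro j
    induction j using Fin.induction with
    | zero => simp
    | succ j ih =>
      rw [Fin.partialSum_succ]
      have := hmono j
      omega

lemma sum_powersetCard_le_mul_pow {k : ℕ} {f : Finset ℕ → ℝ≥0∞} {g : ℕ → ℝ≥0∞}
    (hfg : ∀ o : Fin (k + 1) → ℕ, StrictMono o →
      f (Finset.univ.image o) ≤ ∏ j : Fin k, g (o j.succ - o j.castSucc)) (n : ℕ) :
    ∑ T ∈ (Finset.range n).powersetCard (k + 1), f T ≤ n * (∑ i ∈ Finset.Icc 1 n, g i) ^ k := by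
  set Q := Finset.range n ×ˢ Fintype.piFinset fun _ : Fin k => Finset.Icc 1 n
  set φ : ℕ × (Fin k → ℕ) → Finset ℕ := fun q =>
    Finset.univ.image fun j => q.1 + Fin.partialSum q.2 j
  have hcover : (Finset.range n).powersetCard (k + 1) ⊆ Q.image φ := fun T hT => by
    obtain ⟨i, hi, Δ, hΔ, rfl⟩ := exists_image_add_partialSum_eq hT
    exact Finset.mem_image.2 ⟨(i, Δ), Finset.mem_product.2 ⟨hi, hΔ⟩, rfl⟩
  calc ∑ T ∈ (Finset.range n).powersetCard (k + 1), f T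
      ≤ ∑ T ∈ Q.image φ, f T := Finset.sum_le_sum_of_subset hcover
    _ ≤ ∑ q ∈ Q, f (φ q) := Finset.sum_image_le_of_nonneg fun _ _ => zero_le
    _ ≤ ∑ q ∈ Q, ∏ j, g (q.2 j) := by
        gcongr with q hq
        have hΔ (j : Fin k) : 0 < q.2 j :=
          (Finset.mem_Icc.1 (Fintype.mem_piFinset.1 (Finset.mem_product.1 hq).2 j)).1
        refine (hfg _ (strictMono_add_partialSum hΔ q.1)).trans_eq ?_
        simp [Fin.partialSum_succ, ← add_assoc]
    _ = n * (∑ i ∈ Finset.Icc 1 n, g i) ^ k := by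
        rw [Finset.sum_product, ← Fin.prod_const, Finset.prod_univ_sum]
        simp

lemma pow_le_choose_of_mul_le {x : ℝ} (hx : 0 ≤ x) {m k : ℕ} (h : (x + 1) * k ≤ m + 1) :
    x ^ k ≤ m.choose k := by
  have hk : k ≤ m + 1 := by
    have : (k : ℝ) ≤ m + 1 := le_trans (by nlinarith [(Nat.cast_nonneg k : (0 : ℝ) ≤ k)]) h
    exact_mod_cast this
  refine le_trans ?_ (Nat.pow_le_choose k m)
  rw [le_div_iff₀ (by positivity), Nat.cast_sub hk]
  calc x ^ k * k.factorial ≤ x ^ k * (k : ℝ) ^ k := by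
        gcongr
        exact_mod_cast Nat.factorial_le_pow k
    _ = (x * k) ^ k := (mul_pow _ _ _).symm
    _ ≤ _ := by
        gcongr
        push_cast
        linarith

/-- The local time exponent: up to logarithms, the walk on `ℤ^d` spends at most time
`n ^ localTimeExponent d` at any single site before time `n`. -/
noncomputable def localTimeExponent (d : ℕ) : ℝ := if d = 1 then 1 / 2 else 0

lemma localTimeExponent_nonneg (d : ℕ) : 0 ≤ localTimeExponent d := by
  unfold localTimeExponent; positivity

lemma localTimeExponent_le_half (d : ℕ) : localTimeExponent d ≤ 1 / 2 := by
  unfold localTimeExponent; split_ifs <;> norm_num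

lemma one_div_sqrt_pow_le {d : ℕ} (hd : 1 ≤ d) {x : ℝ} (hx : 1 ≤ x) :
    (1 / √x) ^ d ≤ x ^ localTimeExponent d * x⁻¹ := by
  have hx0 : 0 < x := by linarith
  obtain rfl | hd := hd.eq_or_lt
  · rw [localTimeExponent, if_pos rfl, ← Real.sqrt_eq_rpow, ← div_eq_mul_inv, Real.sqrt_div_self,
      pow_one, one_div]
  · rw [localTimeExponent, if_neg hd.ne', Real.rpow_zero, one_mul]
    calc (1 / √x) ^ d ≤ (1 / √x) ^ 2 :=
          pow_le_pow_of_le_one (by positivity)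
            ((div_le_one (by positivity)).2 (Real.one_le_sqrt.2 hx)) hd
      _ = x⁻¹ := by rw [div_pow, Real.sq_sqrt hx0.le, one_pow, one_div]

lemma sum_one_div_sqrt_pow_le {d : ℕ} (hd : 1 ≤ d) (n : ℕ) :
    ∑ i ∈ Finset.Icc 1 n, (1 / √(i : ℝ)) ^ d
      ≤ (n : ℝ) ^ localTimeExponent d * (1 + Real.log n) := by
  calc ∑ i ∈ Finset.Icc 1 n, (1 / √(i : ℝ)) ^ d
      ≤ ∑ i ∈ Finset.Icc 1 n, (n : ℝ) ^ localTimeExponent d * (i : ℝ)⁻¹ := by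
        refine Finset.sum_le_sum fun i hi => ?_
        obtain ⟨hi1, hin⟩ := Finset.mem_Icc.1 hi
        refine (one_div_sqrt_pow_le hd (by exact_mod_cast hi1)).trans ?_
        gcongr
        exact localTimeExponent_nonneg d
    _ = (n : ℝ) ^ localTimeExponent d * harmonic n := by
        rw [← Finset.mul_sum, harmonic_eq_sum_Icc]
        push_cast
        rfl
    _ ≤ (n : ℝ) ^ localTimeExponent d * (1 + Real.log n) := by
        gcongr
        exact harmonic_le_one_add_log n

namespace IsCTSRW

variable {d : ℕ} {Ω : Type*} [MeasurableSpace Ω] {P : (Fin d → ℤ) → Measure Ω}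
  {S : ℝ → Ω → (Fin d → ℤ)}

lemma measurable (hS : IsCTSRW d P S) (t : ℝ) : Measurable (S t) :=
  hS.meas.comp measurable_prodMk_left

lemma measure_eq (hS : IsCTSRW d P S) {t : ℝ} (ht : 0 ≤ t) (x y : Fin d → ℤ) :
    P x {ω | S t ω = y} = ENNReal.ofReal (heatKernel d t x y) := by
  have := hS.prob x
  have h := hS.fdd x 0 (fun _ => t) ht (fun i => i.elim0) (fun _ => y)
  simp only [Finset.univ_eq_empty, Finset.prod_empty, mul_one, forall_const] at h
  rw [← h, ENNReal.ofReal_toReal (measure_ne_top _ _)]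

lemma tsum_measure_eq (hS : IsCTSRW d P S) (t : ℝ) (x : Fin d → ℤ) :
    ∑' y, P x {ω | S t ω = y} = 1 := by
  have := hS.prob x
  have h := measure_iUnion (μ := P x) (pairwise_disjoint_fiber (S t)) fun y =>
    hS.measurable t (measurableSet_singleton y)
  rw [← preimage_iUnion, iUnion_of_singleton, preimage_univ, measure_univ] at h
  exact h.symm

lemma measure_exists_forall_eq_le (hS : IsCTSRW d P S) (x : Fin d → ℤ) {k : ℕ}
    {t : Fin (k + 1) → ℝ} (h0 : 0 ≤ t 0) (ht : StrictMono t) :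
    P x {ω | ∃ y, ∀ j, S (t j) ω = y}
      ≤ ∏ j : Fin k, ENNReal.ofReal ((1 / √(t j.succ - t j.castSucc)) ^ d) := by
  have := hS.prob x
  have hgap (j : Fin k) : 0 < t j.succ - t j.castSucc := sub_pos.2 (ht j.castSucc_lt_succ)
  have hsite (y : Fin d → ℤ) : P x {ω | ∀ j, S (t j) ω = y} ≤ P x {ω | S (t 0) ω = y}
      * ∏ j : Fin k, ENNReal.ofReal ((1 / √(t j.succ - t j.castSucc)) ^ d) := by
    have hfdd := hS.fdd x k t h0 (fun j => (ht j.castSucc_lt_succ).le) fun _ => y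
    rw [← ENNReal.ofReal_toReal (measure_ne_top (P x) _), hfdd, hS.measure_eq h0,
      ENNReal.ofReal_mul (heatKernel_nonneg h0 x y),
      ENNReal.ofReal_prod_of_nonneg fun j _ => heatKernel_nonneg (hgap j).le y y]
    gcongr with j
    exact heatKernel_self_le (hgap j) y
  calc P x {ω | ∃ y, ∀ j, S (t j) ω = y} ≤ ∑' y, P x {ω | ∀ j, S (t j) ω = y} := by
        rw [ofPred_exists]
        exact measure_iUnion_le _
    _ ≤ _ := ENNReal.tsum_le_tsum hsite
    _ = _ := by rw [ENNReal.tsum_mul_right, hS.tsum_measure_eq, one_mul]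

lemma choose_mul_measure_le_visitCount_le (hS : IsCTSRW d P S) (x : Fin d → ℤ) {v : ℝ}
    (hv : 0 ≤ v) (n m k : ℕ) :
    m.choose (k + 1) * (P x).real {ω | ∃ y, m ≤ visitCount (fun i : ℕ => S (v + i) ω) n y}
      ≤ n * (∑ i ∈ Finset.Icc 1 n, (1 / √(i : ℝ)) ^ d) ^ k := by
  have := hS.prob x
  have hgaps (o : Fin (k + 1) → ℕ) (ho : StrictMono o) :
      P x {ω | ∃ y, ∀ i ∈ Finset.univ.image o, S (v + i) ω = y}
        ≤ ∏ j : Fin k, ENNReal.ofReal ((1 / √((o j.succ - o j.castSucc : ℕ) : ℝ)) ^ d) := by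
    have ht : StrictMono fun j => v + (o j : ℝ) := (Nat.strictMono_cast.comp ho).const_add v
    convert hS.measure_exists_forall_eq_le x (by positivity) ht using 5 with ω j
    · simp
    · rw [Nat.cast_sub (ho j.castSucc_lt_succ).le, add_sub_add_left_eq_sub]
  have h := (_root_.choose_mul_measure_le_visitCount_le (P x) (fun i => hS.measurable (v + i)) n m
    (k + 1)).trans
      (sum_powersetCard_le_mul_pow (g := fun i => .ofReal ((1 / √(i : ℝ)) ^ d)) hgaps n)
  rw [← ENNReal.ofReal_sum_of_nonneg fun i _ => by positivity, ← ENNReal.ofReal_pow (by positivity),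
    ← ENNReal.ofReal_natCast n, ← ENNReal.ofReal_mul (by positivity)] at h
  simpa [measureReal_def] using ENNReal.toReal_le_of_le_ofReal (by positivity) h

lemma measure_le_visitCount_le (hS : IsCTSRW d P S) (x : Fin d → ℤ) {v : ℝ} (hv : 0 ≤ v)
    {n m k : ℕ} {G : ℝ} (hG1 : 1 ≤ G) (hG : ∑ i ∈ Finset.Icc 1 n, (1 / √(i : ℝ)) ^ d ≤ G)
    (hm : (Real.exp 1 * G + 1) * (k + 1) ≤ m + 1) :
    (P x).real {ω | ∃ y, m ≤ visitCount (fun i : ℕ => S (v + i) ω) n y}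
      ≤ n * Real.exp (-(k + 1)) := by
  set p := (P x).real {ω | ∃ y, m ≤ visitCount (fun i : ℕ => S (v + i) ω) n y}
  have hpow : (Real.exp (k + 1) * p) * G ^ (k + 1) ≤ n * G ^ (k + 1) := by
    calc (Real.exp (k + 1) * p) * G ^ (k + 1) = (Real.exp 1 * G) ^ (k + 1) * p := by
          rw [mul_pow, ← Real.exp_nat_mul]; push_cast; ring_nf
      _ ≤ m.choose (k + 1) * p := by
          gcongr
          exact pow_le_choose_of_mul_le (by positivity) (by exact_mod_cast hm)
      _ ≤ n * (∑ i ∈ Finset.Icc 1 n, (1 / √(i : ℝ)) ^ d) ^ k :=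
          hS.choose_mul_measure_le_visitCount_le x hv n m k
      _ ≤ n * G ^ k := by gcongr
      _ ≤ n * G ^ (k + 1) := by gcongr; exact k.le_succ
  rw [Real.exp_neg, ← div_eq_mul_inv, le_div_iff₀' (Real.exp_pos _)]
  exact le_of_mul_le_mul_right hpow (by positivity)

lemma eventually_measure_lt_visitCount_le (hS : IsCTSRW d P S) (hd : 1 ≤ d) (x : Fin d → ℤ)
    {δ : ℝ} (hδ : 0 < δ) :
    ∀ᶠ n : ℕ in atTop, ∀ v : ℝ, 0 ≤ v →
      (P x).real {ω | ∃ y, (n : ℝ) ^ (localTimeExponent d + δ)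
        < visitCount (fun i : ℕ => S (v + i) ω) n y} ≤ Real.exp (-(n : ℝ) ^ (δ / 3)) := by
  have := hS.prob x
  filter_upwards [tendsto_natCast_atTop_atTop.eventually
      (eventually_mul_one_add_log_le_rpow (half_pos hδ) (2 * Real.exp 1 + 2)),
    tendsto_natCast_atTop_atTop.eventually
      (eventually_mul_exp_neg_rpow_le (half_pos hδ) (by linarith : δ / 3 < δ / 2) 1),
    eventually_ge_atTop 1] with n hlog hexp hn v hv
  have hn1 : (1 : ℝ) ≤ n := by exact_mod_cast hn
  set β := localTimeExponent d
  set D := (n : ℝ) ^ (δ / 2) with hD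
  set G := (n : ℝ) ^ β * (1 + Real.log n) with hG
  have hG1 : 1 ≤ G := one_le_mul_of_one_le_of_one_le
    (Real.one_le_rpow hn1 (localTimeExponent_nonneg d)) (by linarith [Real.log_nonneg hn1])
  have hDfloor : D ≤ ⌊D⌋₊ + 1 := (Nat.lt_floor_add_one D).le
  have hfloorD : (⌊D⌋₊ : ℝ) + 1 ≤ 2 * D := by
    have hD1 : 1 ≤ D := Real.one_le_rpow hn1 (half_pos hδ).le
    linarith [Nat.floor_le (zero_le_one.trans hD1)]
  have hm : (Real.exp 1 * G + 1) * (⌊D⌋₊ + 1) ≤ (⌊(n : ℝ) ^ (β + δ)⌋₊ + 1 : ℕ) + 1 := by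
    calc (Real.exp 1 * G + 1) * (⌊D⌋₊ + 1) ≤ (Real.exp 1 * G + G) * (2 * D) := by gcongr
      _ = (n : ℝ) ^ β * ((2 * Real.exp 1 + 2) * (1 + Real.log n)) * D := by rw [hG]; ring
      _ ≤ (n : ℝ) ^ β * D * D := by gcongr
      _ = (n : ℝ) ^ (β + δ) := by
          rw [mul_assoc, hD, ← Real.rpow_add (by linarith), ← Real.rpow_add (by linarith),
            add_halves]
      _ ≤ _ := by
          push_cast
          linarith [Nat.lt_floor_add_one ((n : ℝ) ^ (β + δ))]
  calc (P x).real {ω | ∃ y, (n : ℝ) ^ (β + δ) < visitCount (fun i : ℕ => S (v + i) ω) n y}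
      ≤ (P x).real {ω | ∃ y, ⌊(n : ℝ) ^ (β + δ)⌋₊ + 1
          ≤ visitCount (fun i : ℕ => S (v + i) ω) n y} :=
        measureReal_mono fun ω ⟨y, hy⟩ => ⟨y, (Nat.floor_lt (by positivity)).2 hy⟩
    _ ≤ n * Real.exp (-(⌊D⌋₊ + 1)) :=
        hS.measure_le_visitCount_le x hv hG1 (sum_one_div_sqrt_pow_le hd n) hm
    _ ≤ 1 * n * Real.exp (-D) := by rw [one_mul]; gcongr
    _ ≤ Real.exp (-(n : ℝ) ^ (δ / 3)) := hexp

end IsCTSRW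

/-! ### Lower deviations of weighted sums of nonnegative variables -/

lemma exp_neg_le_one_sub_half {y : ℝ} (hy0 : 0 ≤ y) (hy1 : y ≤ 1) :
    Real.exp (-y) ≤ 1 - y / 2 := by
  rw [Real.exp_neg, inv_le_iff_one_le_mul₀ (Real.exp_pos y)]
  nlinarith [Real.add_one_le_exp y]

section LowerDeviations

variable {Ω : Type*} [MeasurableSpace Ω] {μ : Measure Ω} [IsProbabilityMeasure μ]

lemma integrable_exp_neg_mul {X : Ω → ℝ} (hX : Measurable X) (hX0 : ∀ ω, 0 ≤ X ω) {s : ℝ}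
    (hs : 0 ≤ s) : Integrable (fun ω => Real.exp (-s * X ω)) μ := by
  refine .of_bound (by fun_prop) 1 (.of_forall fun ω => ?_)
  rw [Real.norm_of_nonneg (Real.exp_pos _).le, Real.exp_le_one_iff, neg_mul, neg_nonpos]
  exact mul_nonneg hs (hX0 ω)

lemma mgf_neg_le {X : Ω → ℝ} (hX : Measurable X) (hX0 : ∀ ω, 0 ≤ X ω) {s r : ℝ} (hs : 0 ≤ s)
    (hr : 0 ≤ r) (hsr : s * r ≤ 1) :
    mgf X μ (-s) ≤ Real.exp (-(s * r / 2 * μ.real {ω | r < X ω})) := by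
  have hmeas : MeasurableSet {ω | r < X ω} := measurableSet_lt measurable_const hX
  have hintegrable : Integrable (fun ω => s * r / 2 * {ω | r < X ω}.indicator 1 ω) μ :=
    ((integrable_const (1 : ℝ)).indicator hmeas).const_mul _
  have hpoint (ω : Ω) :
      Real.exp (-s * X ω) ≤ 1 - s * r / 2 * {ω | r < X ω}.indicator 1 ω := by
    by_cases h : ω ∈ {ω | r < X ω}
    · rw [indicator_of_mem h, Pi.one_apply, mul_one]
      refine le_trans (Real.exp_le_exp.2 ?_)
        (exp_neg_le_one_sub_half (mul_nonneg hs hr) hsr)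
      rw [neg_mul, neg_le_neg_iff]
      exact mul_le_mul_of_nonneg_left (le_of_lt h) hs
    · rw [indicator_of_notMem h, mul_zero, sub_zero, Real.exp_le_one_iff, neg_mul, neg_nonpos]
      exact mul_nonneg hs (hX0 ω)
  calc mgf X μ (-s) ≤ ∫ ω, (1 - s * r / 2 * {ω | r < X ω}.indicator 1 ω) ∂μ :=
        integral_mono (integrable_exp_neg_mul hX hX0 hs) ((integrable_const 1).sub hintegrable)
          hpoint
    _ = 1 - s * r / 2 * μ.real {ω | r < X ω} := by
        rw [integral_sub (integrable_const 1) hintegrable, integral_const_mul,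
          integral_indicator_one hmeas, integral_const, probReal_univ, one_smul]
    _ ≤ _ := Real.one_sub_le_exp_neg _

lemma measure_sum_mul_le_le {ι : Type*} {X : ι → Ω → ℝ} (hind : iIndepFun X μ)
    (hX : ∀ i, Measurable (X i)) (hX0 : ∀ i ω, 0 ≤ X i ω) {T : Finset ι} {l : ι → ℝ}
    (hl : ∀ i, 0 ≤ l i) {a r q : ℝ} (ha : 0 < a) (hr : 0 ≤ r) (hlr : ∀ i, l i * r ≤ a)
    (hq : ∀ i, q ≤ μ.real {ω | r < X i ω}) :
    μ.real {ω | ∑ i ∈ T, l i * X i ω ≤ a}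
      ≤ Real.exp (1 - (∑ i ∈ T, l i) * r * q / (2 * a)) := by
  set Y : ι → Ω → ℝ := fun i ω => l i * X i ω
  have hY (i : ι) : Measurable (Y i) := (hX i).const_mul _
  have hsum : ∑ i ∈ T, Y i = fun ω => ∑ i ∈ T, l i * X i ω := Finset.sum_fn _ _
  have hsum0 (ω : Ω) : 0 ≤ ∑ i ∈ T, l i * X i ω :=
    Finset.sum_nonneg fun i _ => mul_nonneg (hl i) (hX0 i ω)
  have hindY : iIndepFun Y μ :=
    hind.comp (fun i x => l i * x) fun i => measurable_const_mul _
  have hmgf (i : ι) : mgf (Y i) μ (-a⁻¹) ≤ Real.exp (-(l i / a * r / 2 * q)) := by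
    have hli : 0 ≤ l i / a := div_nonneg (hl i) ha.le
    rw [mgf_const_mul, mul_neg, ← div_eq_mul_inv]
    refine (mgf_neg_le (hX i) (hX0 i) hli hr ?_).trans ?_
    · rw [div_mul_eq_mul_div, div_le_one ha]
      exact hlr i
    · gcongr
      exact hq i
  calc μ.real {ω | ∑ i ∈ T, l i * X i ω ≤ a}
      ≤ Real.exp (- -a⁻¹ * a) * mgf (fun ω => ∑ i ∈ T, l i * X i ω) μ (-a⁻¹) :=
        measure_le_le_exp_mul_mgf a (neg_nonpos.2 (inv_nonneg.2 ha.le))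
          (integrable_exp_neg_mul (Finset.measurable_fun_sum T fun i _ => hY i) hsum0
            (inv_nonneg.2 ha.le))
    _ ≤ Real.exp 1 * ∏ i ∈ T, Real.exp (-(l i / a * r / 2 * q)) := by
        rw [neg_neg, inv_mul_cancel₀ ha.ne', ← hsum, hindY.mgf_sum hY]
        gcongr with i
        · exact fun i _ => mgf_nonneg
        · exact hmgf i
    _ = _ := by
        rw [← Real.exp_sum, ← Real.exp_add, Finset.sum_neg_distrib, ← Finset.sum_mul,
          ← Finset.sum_div, ← Finset.sum_mul, ← Finset.sum_div, ← sub_eq_add_neg]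
        congr 2
        field_simp

lemma measure_sum_comp_le_le {ι : Type*} [DecidableEq ι] {X : ι → Ω → ℝ} (hind : iIndepFun X μ)
    (hX : ∀ i, Measurable (X i)) (hX0 : ∀ i ω, 0 ≤ X i ω) {s : ℕ → ι} {n : ℕ} {a r q : ℝ}
    (ha : 0 < a) (hr : 0 ≤ r) (hs : ∀ i, visitCount s n i * r ≤ a)
    (hq : ∀ i, q ≤ μ.real {ω | r < X i ω}) :
    μ.real {ω | ∑ k ∈ Finset.range n, X (s k) ω ≤ a} ≤ Real.exp (1 - n * r * q / (2 * a)) := by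
  have hsum (f : ι → ℝ) : ∑ k ∈ Finset.range n, f (s k)
      = ∑ i ∈ (Finset.range n).image s, visitCount s n i * f i := by
    simp only [Finset.sum_comp f s, nsmul_eq_mul, visitCount]
  have hcard := hsum fun _ => 1
  simp only [Finset.sum_const, Finset.card_range, nsmul_eq_mul, mul_one] at hcard
  have hset (ω : Ω) := hsum fun i => X i ω
  simp only [hcard, hset]
  exact measure_sum_mul_le_le hind hX hX0 (fun _ => by positivity) ha hr hs hq

end LowerDeviations

/-! ### Lower deviations of the scenery along a path -/

lemma sExp_eq_max (d : ℕ) {α : ℝ} (hα : 0 < α) :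
    sExp d α = max (localTimeExponent d + (1 - localTimeExponent d) / α) 1 := by
  unfold sExp localTimeExponent
  split_ifs
  · congr 1
    field_simp
    ring
  · simp

/-- For scenery values above `n ^ ρ`, the first inequality keeps the product of local time and
scenery at any site below the target `n ^ (sExp d α - ε)`, as the Chernoff bound requires, and the
second makes that bound stretched exponential. -/
lemma exists_threshold_exponent (d : ℕ) {α : ℝ} (hα : 0 < α) {ε : ℝ} (hε0 : 0 < ε)
    (hε : ε < 1 / 2) :
    ∃ ρ > 0, localTimeExponent d + ρ < sExp d α - ε ∧ ρ * α < 1 + ρ - sExp d α + ε := by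
  have hβ0 := localTimeExponent_nonneg d
  have hβ := localTimeExponent_le_half d
  rw [sExp_eq_max d hα]
  set β := localTimeExponent d
  obtain hα1 | hα1 := lt_or_ge α 1
  · have hdiv : 1 - β < (1 - β) / α := by
      rw [lt_div_iff₀ hα]; nlinarith
    rw [max_eq_left (by linarith)]
    have hlt : max 0 ((β + (1 - β) / α - 1 - ε) / (1 - α)) < (1 - β) / α - ε := by
      refine max_lt (by linarith) ?_
      rw [div_lt_iff₀ (by linarith)]
      have : (1 - β) / α * α = 1 - β := div_mul_cancel₀ _ hα.ne'
      nlinarith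
    obtain ⟨ρ, hρ, hρ'⟩ := exists_between hlt
    obtain ⟨hρ0, hρ1⟩ := max_lt_iff.1 hρ
    rw [div_lt_iff₀ (by linarith)] at hρ1
    exact ⟨ρ, hρ0, by linarith, by linarith⟩
  · have hdiv : (1 - β) / α ≤ 1 - β := div_le_self (by linarith) hα1
    rw [max_eq_right (by linarith)]
    obtain ⟨ρ, hρ0, hρ⟩ := exists_between
      (lt_min (by linarith : 0 < 1 - ε - β) (div_pos hε0 hα))
    obtain ⟨hρ1, hρ2⟩ := lt_min_iff.1 hρ
    rw [lt_div_iff₀ hα] at hρ2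
    exact ⟨ρ, hρ0, by linarith, by linarith⟩

namespace IsScenery

variable {d : ℕ} {α : ℝ} {Ω : Type*} [MeasurableSpace Ω] {μ : Measure Ω}
  {z : (Fin d → ℤ) → Ω → ℝ}

lemma measure_lt_eq (hz : IsScenery d α μ z) (x : Fin d → ℤ) (r : ℝ) :
    μ {ζ | r < z x ζ} = μ {ζ | r < z 0 ζ} :=
  (hz.ident x).measure_mem_eq measurableSet_Ioi

lemma eventually_rpow_neg_le (hz : IsScenery d α μ z) (hα : 0 < α) {γ : ℝ} (hγ : α < γ) :
    ∀ᶠ r : ℝ in atTop, r ^ (-γ) ≤ μ.real {ζ | r < z 0 ζ} := by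
  filter_upwards [hz.tail.eventually (lt_mem_nhds (neg_lt_neg hγ)),
    hz.tail.eventually (gt_mem_nhds (neg_lt_zero.2 hα)), eventually_gt_atTop 1] with r hlow hneg hr
  rw [← measureReal_def] at hlow hneg
  have hq : 0 < μ.real {ζ | r < z 0 ζ} := by
    refine measureReal_nonneg.lt_of_ne fun h => ?_
    simp [← h] at hneg
  rw [Real.rpow_def_of_pos (by linarith), ← Real.le_log_iff_exp_le hq, mul_comm]
  exact ((lt_div_iff₀ (Real.log_pos hr)).1 hlow).le

lemma eventually_le_rpow_neg (hz : IsScenery d α μ z) {γ : ℝ} (hγ : γ < α) :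
    ∀ᶠ r : ℝ in atTop, μ.real {ζ | r < z 0 ζ} ≤ r ^ (-γ) := by
  filter_upwards [hz.tail.eventually (gt_mem_nhds (neg_lt_neg hγ)),
    eventually_gt_atTop 1] with r hup hr
  rw [← measureReal_def] at hup
  obtain hq | hq := (measureReal_nonneg (μ := μ) (s := {ζ | r < z 0 ζ})).eq_or_lt
  · rw [← hq]
    positivity
  · rw [Real.rpow_def_of_pos (by linarith), ← Real.log_le_iff_le_exp hq, mul_comm]
    exact ((div_lt_iff₀ (Real.log_pos hr)).1 hup).le

lemma exists_eventually_measure_sum_comp_le (hz : IsScenery d α μ z) (hα : 0 < α) {ε : ℝ}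
    (hε0 : 0 < ε) (hε : ε < 1 / 2) :
    ∃ δ > (0 : ℝ), ∃ c > (0 : ℝ), ∀ᶠ n : ℕ in atTop, ∀ s : ℕ → (Fin d → ℤ),
      (∀ x, visitCount s n x ≤ (n : ℝ) ^ (localTimeExponent d + δ)) →
      μ.real {ζ | ∑ k ∈ Finset.range n, z (s k) ζ ≤ (n : ℝ) ^ (sExp d α - ε)}
        ≤ Real.exp (-(n : ℝ) ^ c) := by
  have := hz.prob
  obtain ⟨ρ, hρ0, hlocal, htail⟩ := exists_threshold_exponent d hα hε0 hε
  obtain ⟨γ, hαγ, hγ⟩ := exists_between ((lt_div_iff₀' hρ0).2 htail)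
  rw [lt_div_iff₀' hρ0] at hγ
  set b := sExp d α - ε
  have hc : 0 < 1 + ρ - ρ * γ - b := by linarith
  refine ⟨b - ρ - localTimeExponent d, by linarith, (1 + ρ - ρ * γ - b) / 2, half_pos hc, ?_⟩
  have hnat := tendsto_natCast_atTop_atTop (R := ℝ)
  filter_upwards [((tendsto_rpow_atTop hρ0).comp hnat).eventually
      (hz.eventually_rpow_neg_le hα hαγ),
    hnat.eventually (eventually_mul_rpow_le_rpow (half_lt_self hc) 4),
    hnat.eventually (eventually_le_rpow (half_pos hc) 1), eventually_gt_atTop 0]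
    with n (hq : ((n : ℝ) ^ ρ) ^ (-γ) ≤ μ.real {ζ | (n : ℝ) ^ ρ < z 0 ζ}) hpow hone hn s hs
  have hn0 : (0 : ℝ) < n := by exact_mod_cast hn
  have hvisit (x : Fin d → ℤ) : visitCount s n x * (n : ℝ) ^ ρ ≤ (n : ℝ) ^ b := by
    calc visitCount s n x * (n : ℝ) ^ ρ
        ≤ (n : ℝ) ^ (localTimeExponent d + (b - ρ - localTimeExponent d)) * (n : ℝ) ^ ρ := by
          gcongr
          exact hs x
      _ = (n : ℝ) ^ b := by
          rw [← Real.rpow_add hn0]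
          congr 1
          ring
  have hexponent : n * (n : ℝ) ^ ρ * ((n : ℝ) ^ ρ) ^ (-γ) / (2 * (n : ℝ) ^ b)
      = (n : ℝ) ^ (1 + ρ - ρ * γ - b) / 2 := by
    rw [Real.rpow_sub hn0 _ b, Real.rpow_sub hn0 _ (ρ * γ), Real.rpow_add hn0, Real.rpow_one,
      Real.rpow_neg (by positivity), ← Real.rpow_mul hn0.le]
    field_simp
  refine (measure_sum_comp_le_le hz.indep hz.meas hz.nonneg (by positivity) (by positivity) hvisit
    fun x => hq.trans_eq (by simp [measureReal_def, hz.measure_lt_eq x])).trans ?_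
  rw [hexponent, Real.exp_le_exp]
  linarith

end IsScenery

/-! ### From unit-spaced sums to integrals -/

lemma lintegral_Ioc_natCast_eq {h : ℝ → ℝ≥0∞} (hh : Measurable h) (n : ℕ) :
    ∫⁻ u in Ioc (0 : ℝ) n, h u = ∫⁻ v in Ioc (0 : ℝ) 1, ∑ i ∈ Finset.range n, h (v + i) := by
  induction n with
  | zero => simp
  | succ n ih =>
    have hunion : Ioc (0 : ℝ) (n + 1 : ℕ) = Ioc (0 : ℝ) n ∪ Ioc (n : ℝ) (n + 1) := by
      rw [Ioc_union_Ioc_eq_Ioc n.cast_nonneg (by linarith), Nat.cast_succ]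
    have hshift : ∫⁻ u in Ioc (n : ℝ) (n + 1), h u = ∫⁻ v in Ioc (0 : ℝ) 1, h (v + n) := by
      rw [← (measurePreserving_add_right volume (n : ℝ)).setLIntegral_comp_preimage_emb
        (measurableEmbedding_addRight _) h]
      simp
    simp_rw [Finset.sum_range_succ]
    rw [hunion, lintegral_union measurableSet_Ioc
      (Set.disjoint_left.2 fun u hu hu' => (hu'.1.trans_le hu.2).false), ih, hshift,
      lintegral_add_right _ (by fun_prop)]

lemma two_inv_le_measure_le {Ω : Type*} [MeasurableSpace Ω] {ν : Measure Ω}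
    [IsProbabilityMeasure ν] {F : Ω → ℝ≥0∞} (hF : Measurable F) {a : ℝ≥0∞} (ha0 : a ≠ 0)
    (ha : a ≠ ∞) (h : ∫⁻ v, F v ∂ν ≤ a / 2) : 2⁻¹ ≤ ν {v | F v ≤ a} := by
  have hmarkov : ν {v | a ≤ F v} ≤ 2⁻¹ := by
    refine (meas_ge_le_lintegral_div hF.aemeasurable ha0 ha).trans ?_
    rw [ENNReal.div_le_iff ha0 ha, mul_comm, ← div_eq_mul_inv]
    exact h
  calc (2⁻¹ : ℝ≥0∞) = 1 - 2⁻¹ := ENNReal.one_sub_inv_two.symm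
    _ ≤ 1 - ν {v | a ≤ F v} := by gcongr
    _ = ν {v | a ≤ F v}ᶜ := (prob_compl_eq_one_sub (measurableSet_le measurable_const hF)).symm
    _ ≤ ν {v | F v ≤ a} := measure_mono fun v (hv : ¬a ≤ F v) => (not_le.1 hv).le

lemma measure_lintegral_Ioc_le_le {Ω : Type*} [MeasurableSpace Ω] {Q : Measure Ω} [SFinite Q]
    {h : ℝ × Ω → ℝ≥0∞} (hh : Measurable h) {n : ℕ} {a b : ℝ≥0∞} (ha0 : a ≠ 0) (ha : a ≠ ∞)
    (hb : ∀ v ∈ Ioc (0 : ℝ) 1, Q {ω | ∑ i ∈ Finset.range n, h (v + i, ω) ≤ a} ≤ b) :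
    Q {ω | ∫⁻ u in Ioc (0 : ℝ) n, h (u, ω) ≤ a / 2} ≤ 2 * b := by
  set ν : Measure ℝ := volume.restrict (Ioc 0 1)
  have : IsProbabilityMeasure ν := ⟨by simp [ν]⟩
  set F : ℝ × Ω → ℝ≥0∞ := fun p => ∑ i ∈ Finset.range n, h (p.1 + i, p.2)
  have hF : Measurable F := by fun_prop
  have hE : MeasurableSet {p | F p ≤ a} := measurableSet_le hF measurable_const
  have hlower (ω : Ω) (hω : ∫⁻ u in Ioc (0 : ℝ) n, h (u, ω) ≤ a / 2) :
      2⁻¹ ≤ ν ((fun v => (v, ω)) ⁻¹' {p | F p ≤ a}) := by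
    rw [lintegral_Ioc_natCast_eq (by fun_prop)] at hω
    exact two_inv_le_measure_le (F := fun v => F (v, ω)) (by fun_prop) ha0 ha hω
  calc Q {ω | ∫⁻ u in Ioc (0 : ℝ) n, h (u, ω) ≤ a / 2}
      ≤ Q {ω | 2⁻¹ ≤ ν ((fun v => (v, ω)) ⁻¹' {p | F p ≤ a})} := measure_mono hlower
    _ ≤ (∫⁻ ω, ν ((fun v => (v, ω)) ⁻¹' {p | F p ≤ a}) ∂Q) / 2⁻¹ :=
        meas_ge_le_lintegral_div (measurable_measure_prodMk_right hE).aemeasurable (by simp)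
          (by simp)
    _ = 2 * ∫⁻ v, Q (Prod.mk v ⁻¹' {p | F p ≤ a}) ∂ν := by
        rw [← Measure.prod_apply_symm hE, Measure.prod_apply hE, ENNReal.div_eq_inv_mul, inv_inv]
    _ ≤ 2 * ∫⁻ _, b ∂ν :=
        mul_le_mul_right (setLIntegral_mono' measurableSet_Ioc hb) 2
    _ = 2 * b := by rw [lintegral_const, measure_univ, mul_one]

/-! ### Product measures: annealed and quenched bounds -/

section ProductMeasures

variable {α β : Type*} [MeasurableSpace α] [MeasurableSpace β] {μ : Measure α} {ν : Measure β}

lemma measure_prod_le_add [IsProbabilityMeasure μ] [IsProbabilityMeasure ν] {E : Set (α × β)}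
    (hE : MeasurableSet E) {B : Set β} {p : ℝ≥0∞}
    (hp : ∀ y ∉ B, μ ((fun x => (x, y)) ⁻¹' E) ≤ p) : μ.prod ν E ≤ ν B + p := by
  have hsection (y : β) : μ ((fun x => (x, y)) ⁻¹' E) ≤ (toMeasurable ν B).indicator 1 y + p := by
    by_cases hy : y ∈ B
    · rw [indicator_of_mem (subset_toMeasurable ν B hy)]
      exact prob_le_one.trans le_self_add
    · exact (hp y hy).trans le_add_self
  calc μ.prod ν E = ∫⁻ y, μ ((fun x => (x, y)) ⁻¹' E) ∂ν := Measure.prod_apply_symm hE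
    _ ≤ ∫⁻ y, ((toMeasurable ν B).indicator 1 y + p) ∂ν := lintegral_mono hsection
    _ = ν B + p := by
        rw [lintegral_add_right _ measurable_const,
          lintegral_indicator_one (measurableSet_toMeasurable ν B), measure_toMeasurable,
          lintegral_const, measure_univ, mul_one]

variable [IsFiniteMeasure μ] [IsFiniteMeasure ν]

lemma ae_eventually_measure_section_le {E : ℕ → Set (α × β)} (hE : ∀ n, MeasurableSet (E n))
    {q : ℕ → ℝ} (hq : ∀ n, 0 < q n) (hsum : Summable fun n => (μ.prod ν).real (E n) / q n) :
    ∀ᵐ x ∂μ, ∀ᶠ n in atTop, ν.real (Prod.mk x ⁻¹' E n) ≤ q n := by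
  have hmarkov (n : ℕ) : μ {x | .ofReal (q n) ≤ ν (Prod.mk x ⁻¹' E n)}
      ≤ ENNReal.ofReal ((μ.prod ν).real (E n) / q n) := by
    rw [ENNReal.ofReal_div_of_pos (hq n), ofReal_measureReal, Measure.prod_apply (hE n)]
    exact meas_ge_le_lintegral_div (measurable_measure_prodMk_left (hE n)).aemeasurable
      (by simpa using hq n) ENNReal.ofReal_ne_top
  have hfin : ∑' n, μ {x | .ofReal (q n) ≤ ν (Prod.mk x ⁻¹' E n)} ≠ ∞ :=
    ne_top_of_le_ne_top hsum.tsum_ofReal_ne_top (ENNReal.tsum_le_tsum hmarkov)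
  filter_upwards [ae_eventually_notMem hfin] with x hx
  filter_upwards [hx] with n hn
  exact ENNReal.toReal_le_of_le_ofReal (hq n).le (not_le.1 hn).le

lemma ae_eventually_measure_section_le_exp {E : ℕ → Set (α × β)}
    (hE : ∀ n, MeasurableSet (E n)) {c c' : ℝ} (hc' : 0 < c') (hc : c' < c)
    (h : ∀ᶠ n : ℕ in atTop, (μ.prod ν).real (E n) ≤ Real.exp (-(n : ℝ) ^ c)) :
    ∀ᵐ x ∂μ, ∀ᶠ n : ℕ in atTop, ν.real (Prod.mk x ⁻¹' E n) ≤ Real.exp (-(n : ℝ) ^ c') := by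
  refine ae_eventually_measure_section_le hE (fun _ => Real.exp_pos _)
    (Summable.of_norm_bounded_eventually_nat (summable_exp_neg_rpow hc') ?_)
  filter_upwards [h, tendsto_natCast_atTop_atTop.eventually (eventually_mul_rpow_le_rpow hc 2)]
    with n hn hpow
  rw [Real.norm_of_nonneg (by positivity), div_le_iff₀ (Real.exp_pos _), ← Real.exp_add]
  exact hn.trans (Real.exp_le_exp.2 (by linarith))

end ProductMeasures

/-! ### Integrability of the scenery along the walk -/

lemma IsScenery.ae_summable_mul_exp {d : ℕ} {α : ℝ} {Ω : Type*} [MeasurableSpace Ω]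
    {μ : Measure Ω} {z : (Fin d → ℤ) → Ω → ℝ} (hz : IsScenery d α μ z) (hα : 0 < α) {κ : ℝ}
    (hκ : 0 < κ) : ∀ᵐ ζ ∂μ, Summable fun x => z x ζ * Real.exp (-κ * l1Norm x) := by
  have := hz.prob
  have hlarge : Summable fun x => μ.real {ζ | Real.exp (κ / 2 * l1Norm x) < z x ζ} := by
    refine Summable.of_norm_bounded_eventually
      (summable_exp_neg_mul_l1Norm (by positivity : 0 < κ / 2 * (α / 2)) d) ?_
    filter_upwards [(Real.tendsto_exp_atTop.comp
      ((tendsto_l1Norm_cofinite d).const_mul_atTop (half_pos hκ))).eventually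
        (hz.eventually_le_rpow_neg (half_lt_self hα))] with x hx
    rw [Real.norm_of_nonneg measureReal_nonneg, measureReal_def, hz.measure_lt_eq]
    refine hx.trans_eq ?_
    rw [Function.comp_apply, ← Real.exp_mul]
    ring_nf
  have hfin : ∑' x, μ {ζ | Real.exp (κ / 2 * l1Norm x) < z x ζ} ≠ ∞ := by
    simpa only [ofReal_measureReal (measure_ne_top μ _)] using hlarge.tsum_ofReal_ne_top
  filter_upwards [ae_finite_setOfPred_mem hfin] with ζ hζ
  refine Summable.of_norm_bounded_eventually (summable_exp_neg_mul_l1Norm (half_pos hκ) d) ?_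
  filter_upwards [hζ.compl_mem_cofinite] with x hx
  rw [Real.norm_of_nonneg (mul_nonneg (hz.nonneg x ζ) (Real.exp_pos _).le)]
  calc z x ζ * Real.exp (-κ * l1Norm x)
      ≤ Real.exp (κ / 2 * l1Norm x) * Real.exp (-κ * l1Norm x) := by
        gcongr
        exact not_lt.1 hx
    _ = Real.exp (-(κ / 2) * l1Norm x) := by
        rw [← Real.exp_add]
        ring_nf

namespace IsCTSRW

variable {d : ℕ} {Ω : Type*} [MeasurableSpace Ω] {P : (Fin d → ℤ) → Measure Ω}
  {S : ℝ → Ω → (Fin d → ℤ)} {f : (Fin d → ℤ) → ℝ} {κ : ℝ}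

lemma lintegral_comp_le (hS : IsCTSRW d P S) (hf : ∀ y, 0 ≤ f y) (hκ : 0 ≤ κ) {t : ℝ}
    (ht : 0 ≤ t) (x : Fin d → ℤ) :
    ∫⁻ ω, .ofReal (f (S t ω)) ∂P x ≤ .ofReal (Real.exp (2 * d * t * Real.exp κ))
      * ∑' y, .ofReal (f y * Real.exp (-κ * l1Norm (x - y))) := by
  rw [← lintegral_map (f := fun y => .ofReal (f y)) (measurable_of_countable _)
    (hS.measurable t), lintegral_countable', ← ENNReal.tsum_mul_left]
  refine ENNReal.tsum_le_tsum fun y => ?_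
  rw [Measure.map_apply (hS.measurable t) (measurableSet_singleton y)]
  calc .ofReal (f y) * P x {ω | S t ω = y}
      = .ofReal (f y * heatKernel d t x y) := by
        rw [hS.measure_eq ht, ENNReal.ofReal_mul (hf y)]
    _ ≤ .ofReal (f y * (Real.exp (2 * d * t * Real.exp κ)
          * Real.exp (-κ * l1Norm (x - y)))) := by
        gcongr
        · exact hf y
        · exact heatKernel_le_exp hκ ht x y
    _ = _ := by rw [mul_left_comm, ENNReal.ofReal_mul (Real.exp_pos _).le]

lemma ae_integrableOn_comp (hS : IsCTSRW d P S) (hf : ∀ y, 0 ≤ f y) (hκ : 0 ≤ κ)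
    {x : Fin d → ℤ} (hsum : Summable fun y => f y * Real.exp (-κ * l1Norm (x - y))) (t : ℝ) :
    ∀ᵐ ω ∂P x, IntegrableOn (fun u => f (S u ω)) (Ioc 0 t) := by
  have := hS.prob x
  have hfS : Measurable fun p : ℝ × Ω => f (S p.1 p.2) :=
    (measurable_of_countable f).comp hS.meas
  have hswap : Measurable fun p : Ω × ℝ => ENNReal.ofReal (f (S p.2 p.1)) :=
    (hfS.comp measurable_swap).ennreal_ofReal
  have hbound (u : ℝ) (hu : u ∈ Ioc 0 t) : ∫⁻ ω, .ofReal (f (S u ω)) ∂P x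
      ≤ .ofReal (Real.exp (2 * d * t * Real.exp κ))
        * ∑' y, .ofReal (f y * Real.exp (-κ * l1Norm (x - y))) := by
    refine (hS.lintegral_comp_le hf hκ hu.1.le x).trans ?_
    gcongr
    exact hu.2
  have hfin : ∫⁻ ω, (∫⁻ u in Ioc 0 t, .ofReal (f (S u ω))) ∂P x ≠ ∞ := by
    rw [lintegral_lintegral_swap hswap.aemeasurable]
    refine ne_top_of_le_ne_top ?_ (setLIntegral_mono' measurableSet_Ioc hbound)
    rw [setLIntegral_const, Real.volume_Ioc]
    exact ENNReal.mul_ne_top (ENNReal.mul_ne_top ENNReal.ofReal_ne_top hsum.tsum_ofReal_ne_top)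
      ENNReal.ofReal_ne_top
  filter_upwards [ae_lt_top hswap.lintegral_prod_right' hfin] with ω hω
  refine ⟨(hfS.comp measurable_prodMk_right).aestronglyMeasurable, ?_⟩
  rwa [hasFiniteIntegral_iff_ofReal (.of_forall fun u => hf _)]

end IsCTSRW

/-! ### Random walk in random scenery -/

section RandomScenery

variable {d : ℕ} {α : ℝ} {Ωz Ωw : Type*} [MeasurableSpace Ωz] [MeasurableSpace Ωw]
  {μ : Measure Ωz} {z : (Fin d → ℤ) → Ωz → ℝ} {P : (Fin d → ℤ) → Measure Ωw}
  {S : ℝ → Ωw → (Fin d → ℤ)}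

lemma IsScenery.measurable_comp (hz : IsScenery d α μ z) (hS : IsCTSRW d P S) :
    Measurable fun p : ℝ × Ωz × Ωw => z (S p.1 p.2.2) p.2.1 := by
  have hz' : Measurable fun p : (Fin d → ℤ) × Ωz => z p.1 p.2 :=
    measurable_from_prod_countable_right hz.meas
  have hS' : Measurable fun p : ℝ × Ωz × Ωw => S p.1 p.2.2 :=
    hS.meas.comp (f := fun p : ℝ × Ωz × Ωw => (p.1, p.2.2)) (by fun_prop)
  exact hz'.comp (hS'.prodMk (by fun_prop))

lemma exists_eventually_measure_prod_sum_le (hd : 1 ≤ d) (hα : 0 < α) (hz : IsScenery d α μ z)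
    (hS : IsCTSRW d P S) {ε : ℝ} (hε0 : 0 < ε) (hε : ε < 1 / 2) :
    ∃ c > (0 : ℝ), ∀ᶠ n : ℕ in atTop, ∀ v : ℝ, 0 ≤ v →
      μ.prod (P 0) {p | ∑ i ∈ Finset.range n, z (S (v + i) p.2) p.1 ≤ (n : ℝ) ^ (sExp d α - ε)}
        ≤ .ofReal (2 * Real.exp (-(n : ℝ) ^ c)) := by
  have := hz.prob
  have := hS.prob 0
  obtain ⟨δ, hδ, c, hc, hscenery⟩ := hz.exists_eventually_measure_sum_comp_le hα hε0 hε
  refine ⟨min (δ / 3) c, by positivity, ?_⟩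
  filter_upwards [hscenery, hS.eventually_measure_lt_visitCount_le hd 0 hδ,
    eventually_ge_atTop 1] with n hscenery hwalk hn v hv
  have hn1 : (1 : ℝ) ≤ n := by exact_mod_cast hn
  have hmeas : MeasurableSet {p : Ωz × Ωw |
      ∑ i ∈ Finset.range n, z (S (v + i) p.2) p.1 ≤ (n : ℝ) ^ (sExp d α - ε)} :=
    measurableSet_le (Finset.measurable_fun_sum _ fun i _ =>
      (hz.measurable_comp hS).comp measurable_prodMk_left) measurable_const
  have hexp {c' : ℝ} (hc' : min (δ / 3) c ≤ c') :
      Real.exp (-(n : ℝ) ^ c') ≤ Real.exp (-(n : ℝ) ^ min (δ / 3) c) := by gcongr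
  have hsection (ω : Ωw)
      (hω : ω ∉ {ω | ∃ x, (n : ℝ) ^ (localTimeExponent d + δ)
        < visitCount (fun i : ℕ => S (v + i) ω) n x}) :
      μ {ζ | ∑ i ∈ Finset.range n, z (S (v + i) ω) ζ ≤ (n : ℝ) ^ (sExp d α - ε)}
        ≤ .ofReal (Real.exp (-(n : ℝ) ^ min (δ / 3) c)) := by
    rw [← ofReal_measureReal]
    exact ENNReal.ofReal_le_ofReal ((hscenery _ fun x => not_lt.1 fun hx => hω ⟨x, hx⟩).trans
      (hexp (min_le_right _ _)))
  have hvisit : P 0 {ω | ∃ x, (n : ℝ) ^ (localTimeExponent d + δ)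
      < visitCount (fun i : ℕ => S (v + i) ω) n x}
        ≤ .ofReal (Real.exp (-(n : ℝ) ^ min (δ / 3) c)) := by
    rw [← ofReal_measureReal]
    exact ENNReal.ofReal_le_ofReal ((hwalk v hv).trans (hexp (min_le_left _ _)))
  rw [two_mul, ENNReal.ofReal_add (by positivity) (by positivity)]
  exact (measure_prod_le_add hmeas hsection).trans (by gcongr)

lemma exists_eventually_measure_prod_lintegral_le (hd : 1 ≤ d) (hα : 0 < α)
    (hz : IsScenery d α μ z) (hS : IsCTSRW d P S) {ε : ℝ} (hε0 : 0 < ε) (hε : ε < 1 / 2) :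
    ∃ c > (0 : ℝ), ∀ᶠ n : ℕ in atTop,
      (μ.prod (P 0)).real {p | ∫⁻ u in Ioc (0 : ℝ) n, .ofReal (z (S u p.2) p.1)
        ≤ .ofReal ((n : ℝ) ^ (sExp d α - ε)) / 2} ≤ Real.exp (-(n : ℝ) ^ c) := by
  have := hz.prob
  have := hS.prob 0
  obtain ⟨c, hc, hsum⟩ := exists_eventually_measure_prod_sum_le hd hα hz hS hε0 hε
  refine ⟨c / 2, half_pos hc, ?_⟩
  filter_upwards [hsum, tendsto_natCast_atTop_atTop.eventually
    (eventually_mul_exp_neg_rpow_le hc (half_lt_self hc) 4), eventually_ge_atTop 1]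
    with n hsum hexp hn
  have hn1 : (1 : ℝ) ≤ n := by exact_mod_cast hn
  have hbound := measure_lintegral_Ioc_le_le (Q := μ.prod (P 0)) (n := n)
    (a := .ofReal ((n : ℝ) ^ (sExp d α - ε))) (b := .ofReal (2 * Real.exp (-(n : ℝ) ^ c)))
    (hz.measurable_comp hS).ennreal_ofReal (ENNReal.ofReal_pos.2 (by positivity)).ne'
    ENNReal.ofReal_ne_top fun v hv => by
      simpa only [← ENNReal.ofReal_sum_of_nonneg fun _ _ => hz.nonneg _ _,
        ENNReal.ofReal_le_ofReal_iff (Real.rpow_nonneg (n.cast_nonneg : (0 : ℝ) ≤ n) _)]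
        using hsum v hv.1.le
  have hbound' : (μ.prod (P 0)).real {p | ∫⁻ u in Ioc (0 : ℝ) n, .ofReal (z (S u p.2) p.1)
      ≤ .ofReal ((n : ℝ) ^ (sExp d α - ε)) / 2} ≤ 2 * (2 * Real.exp (-(n : ℝ) ^ c)) :=
    ENNReal.toReal_le_of_le_ofReal (by positivity) (hbound.trans_eq
      (by rw [← ENNReal.ofReal_ofNat 2, ← ENNReal.ofReal_mul zero_le_two]))
  calc _ ≤ 2 * (2 * Real.exp (-(n : ℝ) ^ c)) := hbound'
    _ ≤ 4 * n * Real.exp (-(n : ℝ) ^ c) := by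
        rw [← mul_assoc]
        exact mul_le_mul_of_nonneg_right (by linarith) (Real.exp_pos _).le
    _ ≤ _ := hexp

lemma exists_ae_eventually_measure_lintegral_le (hd : 1 ≤ d) (hα : 0 < α)
    (hz : IsScenery d α μ z) (hS : IsCTSRW d P S) {ε : ℝ} (hε0 : 0 < ε) (hε : ε < 1 / 2) :
    ∃ c > (0 : ℝ), ∀ᵐ ζ ∂μ, ∀ᶠ n : ℕ in atTop,
      (P 0).real {ω | ∫⁻ u in Ioc (0 : ℝ) n, .ofReal (z (S u ω) ζ)
        ≤ .ofReal ((n : ℝ) ^ (sExp d α - ε)) / 2} ≤ Real.exp (-(n : ℝ) ^ c) := by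
  have := hz.prob
  have := hS.prob 0
  obtain ⟨c, hc, h⟩ := exists_eventually_measure_prod_lintegral_le hd hα hz hS hε0 hε
  exact ⟨c / 2, half_pos hc, ae_eventually_measure_section_le_exp (fun n => measurableSet_le
    (hz.measurable_comp hS).ennreal_ofReal.lintegral_prod_left' measurable_const)
    (half_pos hc) (half_lt_self hc) h⟩

lemma measure_rwrs_le_le_measure_lintegral_le (hz : IsScenery d α μ z)
    (hS : IsCTSRW d P S) {ζ : Ωz} {t a b : ℝ}
    (hintegrable : ∀ᵐ ω ∂P 0, IntegrableOn (fun u => z (S u ω) ζ) (Ioc 0 t)) {n : ℕ} (hn : n ≤ t)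
    (hab : 2 * a ≤ b) :
    (P 0).real {ω | rwrs d z S t ζ ω ≤ a}
      ≤ (P 0).real {ω | ∫⁻ u in Ioc (0 : ℝ) n, .ofReal (z (S u ω) ζ) ≤ .ofReal b / 2} := by
  have := hS.prob 0
  refine ENNReal.toReal_mono (measure_ne_top _ _) (measure_mono_ae ?_)
  filter_upwards [hintegrable] with ω hω (hle : rwrs d z S t ζ ω ≤ a)
  calc ∫⁻ u in Ioc (0 : ℝ) n, .ofReal (z (S u ω) ζ)
      ≤ ∫⁻ u in Ioc (0 : ℝ) t, .ofReal (z (S u ω) ζ) :=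
        lintegral_mono_set (Ioc_subset_Ioc_right hn)
    _ = .ofReal (rwrs d z S t ζ ω) :=
        (ofReal_integral_eq_lintegral_ofReal hω (.of_forall fun _ => hz.nonneg _ _)).symm
    _ ≤ .ofReal (b / 2) := ENNReal.ofReal_le_ofReal (by linarith)
    _ = .ofReal b / 2 := by rw [ENNReal.ofReal_div_of_pos two_pos, ENNReal.ofReal_ofNat]

end RandomScenery

/-- Proposition (lower deviation below the typical scale): for `d ≥ 1`, `α > 0` and every
`ε > 0` there is `c(ε) > 0` such that ℙ-a.s., `P₀(A(t) ≤ t^{s(d,α)-ε}) ≤ exp(-t^{c(ε)})`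
for all sufficiently large `t`. -/
theorem stmt3 (d : ℕ) (hd : 1 ≤ d) (α : ℝ) (hα : 0 < α)
    {Ωz Ωw : Type*} [MeasurableSpace Ωz] [MeasurableSpace Ωw]
    (μ : Measure Ωz) (z : (Fin d → ℤ) → Ωz → ℝ) (hz : IsScenery d α μ z)
    (P : (Fin d → ℤ) → Measure Ωw) (S : ℝ → Ωw → (Fin d → ℤ)) (hS : IsCTSRW d P S) :
    ∀ ε > (0 : ℝ), ∃ c > (0 : ℝ), ∀ᵐ ζ ∂ μ, ∀ᶠ t in (atTop : Filter ℝ),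
      ((P 0) {ω | rwrs d z S t ζ ω ≤ t ^ (sExp d α - ε)}).toReal ≤ Real.exp (-(t ^ c)) := by
  intro ε hε
  have hε' : 0 < min (ε / 2) (1 / 4) := by positivity
  have hε'ε : sExp d α - ε < sExp d α - min (ε / 2) (1 / 4) := by
    linarith [min_le_left (ε / 2) (1 / 4)]
  obtain ⟨c, hc, hquenched⟩ := exists_ae_eventually_measure_lintegral_le hd hα hz hS hε'
    ((min_le_right _ _).trans_lt (by norm_num))
  refine ⟨c / 2, half_pos hc, ?_⟩
  filter_upwards [hquenched, hz.ae_summable_mul_exp hα one_pos] with ζ hζ hsum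
  filter_upwards [tendsto_nat_floor_atTop.eventually hζ,
    eventually_mul_rpow_le_natFloor_rpow hε'ε 2,
    eventually_mul_rpow_le_natFloor_rpow (half_lt_self hc) 1,
    eventually_ge_atTop 0] with t hbound hscale hrate ht
  have hintegrable := hS.ae_integrableOn_comp (f := (z · ζ)) (x := 0) (hz.nonneg · ζ) zero_le_one
    (by simpa only [zero_sub, l1Norm_neg] using hsum) t
  calc (P 0).real {ω | rwrs d z S t ζ ω ≤ t ^ (sExp d α - ε)}
      ≤ _ := measure_rwrs_le_le_measure_lintegral_le hz hS hintegrable (Nat.floor_le ht) hscale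
    _ ≤ Real.exp (-(⌊t⌋₊ : ℝ) ^ c) := hbound
    _ ≤ Real.exp (-t ^ (c / 2)) := by
        rw [one_mul] at hrate
        gcongr
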